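/- arXiv:2410.01587 — 2 statements merged into one kernel-verified Lean document; each statement's English description precedes it below -/
import Mathlib

section
/- Let A ∈ SL(n,ℍ) be such that gAg⁻¹ = −A⁻¹ for some g ∈ SL(n,ℍ). Then A can be written as a product A = σ·τ where σ, τ ∈ SL(n,ℍ), σ² = −Iₙ (a skew-involution) and τ² = Iₙ (an involution). -/
set_option maxHeartbeats 1000000

noncomputable section

open Matrix

/-- The embedding of `ℂ` into the real quaternions, onto the subalgebra spanned by `1` and `i`. -/
def C2H (z : ℂ) : Quaternion ℝ := ⟨z.re, z.im, 0, 0⟩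

/-- For a quaternion `q = a + b i + c j + d k`, its first complex coordinate `a + b i`. -/
def qc1 (q : Quaternion ℝ) : ℂ := ⟨q.re, q.imI⟩

/-- For a quaternion `q = a + b i + c j + d k`, its second complex coordinate `c + d i`,
so that `q = qc1 q + (qc2 q) * j`. -/
def qc2 (q : Quaternion ℝ) : ℂ := ⟨q.imJ, q.imK⟩

/-- The embedding `Φ` of quaternionic square matrices into complex matrices of doubled size:
writing `A = A₁ + A₂ · j`, `Φ A` is the block matrix `[[A₁, A₂], [-conj A₂, conj A₁]]`. -/
def Phi {m : Type*} (A : Matrix m m (Quaternion ℝ)) : Matrix (m ⊕ m) (m ⊕ m) ℂ :=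
  Matrix.fromBlocks (A.map qc1) (A.map qc2)
    (-(A.map fun q => (starRingEnd ℂ) (qc2 q))) (A.map fun q => (starRingEnd ℂ) (qc1 q))

/-- The determinant of a quaternionic matrix `A`: the determinant of `Φ A`.
`A ∈ GL(n, ℍ)` means `qdet A ≠ 0`, and `A ∈ SL(n, ℍ)` means `qdet A = 1`. -/
def qdet {m : Type*} [Fintype m] [DecidableEq m] (A : Matrix m m (Quaternion ℝ)) : ℂ :=
  (Phi A).det

/-- The `m × m` Jordan block `J(λ, m)` over `ℂ`: `λ` on the diagonal, `1` on the
superdiagonal, `0` elsewhere. -/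
def jordanC (lam : ℂ) (m : ℕ) : Matrix (Fin m) (Fin m) ℂ :=
  Matrix.of fun i j => if (j : ℕ) = (i : ℕ) then lam else if (j : ℕ) = (i : ℕ) + 1 then 1 else 0

/-- The `m × m` Jordan block `J(λ, m)`, `λ ∈ ℂ`, viewed as a quaternionic matrix. -/
def jordanH (lam : ℂ) (m : ℕ) : Matrix (Fin m) (Fin m) (Quaternion ℝ) :=
  (jordanC lam m).map C2H

/-!
Call `s` a skew-reverser of `A` if `s A = -A⁻¹ s`. If such an `s` satisfies `s² = -1`, then
`A = s (s⁻¹ A)` and `(s⁻¹ A)² = 1`, so the task is to replace the given skew-reverser `g` by one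
that squares to `-1`. The square `g²` commutes with `A` and `g`, so elements of `ℝ[g²]` are at our
disposal: if `a, b ∈ ℝ[g²]` satisfy `a b = 0` and `b² - a² = g²`, then
`(a + b A)(a - b A⁻¹) = -g²`, and `s = (a + b A) g⁻¹` works.

Such `a, b` exist because modulo each maximal ideal `ℝ[g²]` becomes `ℝ` or `ℂ`, where `g²` or
`-g²` is a square. In other words, `g⁴` is a fourth power `c⁴`, which lifts to `ℝ[g²]` by Newton's
method; then `t = c² / g²` satisfies `t² = 1`, and `c (1 ± t) / 2` are `b` and `a`.

Finally `s = ((1 + s) / √2)²`, so a real-valued multiplicative function, such as the quaternionic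
determinant, maps `s` to a square that is also a root of unity, that is, to `1`.
-/

section Roots

lemma isUnit_natCast_of_algebra (K : Type*) {R : Type*} [Field K] [CharZero K] [Semiring R]
    [Algebra K R] {n : ℕ} (hn : n ≠ 0) : IsUnit (n : R) := by
  simpa only [map_natCast] using (IsUnit.mk0 (n : K) (Nat.cast_ne_zero.2 hn)).map (algebraMap K R)

open Polynomial in
lemma exists_pow_eq_of_isNilpotent_pow_sub {R : Type*} [CommRing R] {n : ℕ}
    (hn : IsUnit (n : R)) {u x : R} (hu : IsUnit u) (hx : IsNilpotent (x ^ n - u)) :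
    ∃ c : R, c ^ n = u := by
  rcases eq_or_ne n 0 with rfl | hn0
  · have : Subsingleton R := subsingleton_of_zero_eq_one (by simpa using hn)
    exact ⟨1, Subsingleton.elim _ _⟩
  have hxn : IsUnit (x ^ n) := by
    simpa using hx.isUnit_add_right_of_commute hu (Commute.all _ _)
  have hx_unit : IsUnit x := (isUnit_pow_iff hn0).1 hxn
  obtain ⟨c, ⟨-, hc⟩, -⟩ := existsUnique_nilpotent_sub_and_aeval_eq_zero
    (P := (X ^ n - C u : R[X])) (x := x) (by simpa using hx)
    (by simpa [derivative_X_pow] using hn.mul (hx_unit.pow (n - 1)))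
  exact ⟨c, by simpa [sub_eq_zero] using hc⟩

lemma exists_pow_eq_of_forall_maximalSpectrum {R : Type*} [CommRing R] [IsArtinianRing R] {n : ℕ}
    (hn : IsUnit (n : R)) {u : R} (hu : IsUnit u)
    (h : ∀ I : MaximalSpectrum R, ∃ c : R ⧸ I.asIdeal, c ^ n = Ideal.Quotient.mk I.asIdeal u) :
    ∃ c : R, c ^ n = u := by
  choose c hc using h
  obtain ⟨x, hx⟩ := Ideal.pi_quotient_surjective (fun I J hIJ ↦ I.isCoprime_of_ne hIJ) c
  refine exists_pow_eq_of_isNilpotent_pow_sub hn (x := x) hu ?_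
  rw [← mem_nilradical, IsArtinianRing.nilradical_eq_iInf, Ideal.mem_iInf]
  intro I
  rw [← Ideal.Quotient.eq, map_pow, hx, hc]

lemma exists_pow_four_eq_sq_of_field {F : Type*} [Field F] [Algebra ℝ F]
    [Algebra.IsAlgebraic ℝ F] (u : F) : ∃ c : F, c ^ 4 = u ^ 2 := by
  rcases Real.nonempty_algEquiv_or F with ⟨⟨e⟩⟩ | ⟨⟨e⟩⟩
  · refine ⟨e.symm √|e u|, e.injective ?_⟩
    rw [map_pow, map_pow, e.apply_symm_apply, pow_mul _ 2 2, Real.sq_sqrt (abs_nonneg _), sq_abs]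
  · obtain ⟨w, hw⟩ := IsAlgClosed.exists_pow_nat_eq (e u) two_pos
    refine ⟨e.symm w, e.injective ?_⟩
    rw [map_pow, map_pow, e.apply_symm_apply, pow_mul _ 2 2, hw]

lemma exists_pow_four_eq_sq_of_isUnit {R : Type*} [CommRing R] [Algebra ℝ R]
    [FiniteDimensional ℝ R] {u : R} (hu : IsUnit u) : ∃ c : R, c ^ 4 = u ^ 2 := by
  have : IsArtinianRing R := .of_finite ℝ R
  have h4 : IsUnit ((4 : ℕ) : R) := isUnit_natCast_of_algebra ℝ four_ne_zero
  refine exists_pow_eq_of_forall_maximalSpectrum h4 (hu.pow 2) fun I ↦ ?_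
  have := I.isMaximal
  let _ := Ideal.Quotient.field I.asIdeal
  simpa using exists_pow_four_eq_sq_of_field (Ideal.Quotient.mk I.asIdeal u)

lemma exists_mul_eq_zero_sq_sub_sq_eq {R : Type*} [CommRing R] (h2 : IsUnit (2 : R))
    {u c : R} (hu : IsUnit u) (hc : c ^ 4 = u ^ 2) : ∃ a b : R, a * b = 0 ∧ b ^ 2 - a ^ 2 = u := by
  obtain ⟨v, huv⟩ := hu.exists_right_inv
  obtain ⟨half, hhalf⟩ := h2.exists_right_inv
  obtain ⟨t, ht, hct⟩ : ∃ t : R, t ^ 2 = 1 ∧ c ^ 2 * t = u :=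
    ⟨c ^ 2 * v, by linear_combination v ^ 2 * hc + (u * v + 1) * huv,
      by linear_combination v * hc + u * huv⟩
  refine ⟨c * half * (1 - t), c * half * (1 + t), ?_, ?_⟩
  · linear_combination (-c ^ 2 * half ^ 2) * ht
  · linear_combination hct + c ^ 2 * t * (2 * half + 1) * hhalf

end Roots

section RealAlgebra

variable {M : Type*} [Ring M] [Algebra ℝ M]

open scoped IsMulCommutative in
lemma exists_mem_adjoin_mul_eq_zero_sq_sub_sq_eq {u : Mˣ} (hu : IsIntegral ℝ (u : M)) :
    ∃ a ∈ Algebra.adjoin ℝ {(u : M)}, ∃ b ∈ Algebra.adjoin ℝ {(u : M)},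
      a * b = 0 ∧ b * a = 0 ∧ b ^ 2 - a ^ 2 = u := by
  let S := Algebra.adjoin ℝ {(u : M)}
  have : FiniteDimensional ℝ S := Algebra.finite_adjoin_simple_of_isIntegral hu
  let z : S := ⟨u, Algebra.self_mem_adjoin_singleton ℝ _⟩
  have hz : IsUnit z := by
    refine IsArtinianRing.isUnit_of_isIntegral_of_nonZeroDivisor (R := ℝ)
      (Algebra.IsIntegral.isIntegral z) ?_
    refine mem_nonZeroDivisors_iff_right.2 fun x hx ↦ Subtype.ext ?_
    exact u.isUnit.mul_left_eq_zero.1 (congrArg Subtype.val hx)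
  have h2 : IsUnit (2 : S) := isUnit_natCast_of_algebra ℝ two_ne_zero
  obtain ⟨c, hc⟩ := exists_pow_four_eq_sq_of_isUnit hz
  obtain ⟨a, b, hab, hsub⟩ := exists_mul_eq_zero_sq_sub_sq_eq h2 hz hc
  exact ⟨a, a.2, b, b.2, congrArg Subtype.val hab,
    congrArg Subtype.val ((mul_comm b a).trans hab), congrArg Subtype.val hsub⟩

lemma exists_mul_self_eq_of_mul_self_eq_neg_one {s : M} (hs : s * s = -1) :
    ∃ t : M, t * t = s := by
  have hsq : (1 + s) * (1 + s) = (2 : ℝ) • s := by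
    rw [add_mul, mul_add, mul_add, hs, two_smul]
    noncomm_ring
  have hr : (√2)⁻¹ * (√2)⁻¹ * (2 : ℝ) = 1 := by
    rw [← mul_inv, Real.mul_self_sqrt zero_le_two, inv_mul_cancel₀ two_ne_zero]
  exact ⟨(√2)⁻¹ • (1 + s), by rw [smul_mul_smul_comm, hsq, smul_smul, hr, one_smul]⟩

lemma map_eq_one_of_mul_self_eq_neg_one {R : Type*} [Ring R] [LinearOrder R]
    [IsStrictOrderedRing R] (δ : M →* R) {s : M} (hs : s * s = -1) : δ s = 1 := by
  obtain ⟨t, rfl⟩ := exists_mul_self_eq_of_mul_self_eq_neg_one hs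
  have ht : δ t ^ 8 = 1 := by
    rw [← map_pow, show t ^ 8 = (t * t * (t * t)) * (t * t * (t * t)) by noncomm_ring, hs]
    simp
  rcases (pow_eq_one_iff_of_ne_zero (by norm_num)).1 ht with h | ⟨h, -⟩ <;> simp [h]

end RealAlgebra

section SkewReversers

variable {G : Type*} [Group G] [HasDistribNeg G] {A s : G}

lemma semiconjBy_neg_inv_symm (h : SemiconjBy s A (-A⁻¹)) : SemiconjBy s (-A⁻¹) A := by
  simpa using h.inv_right.neg_right

lemma semiconjBy_inv_left_neg_inv (h : SemiconjBy s A (-A⁻¹)) : SemiconjBy s⁻¹ A (-A⁻¹) :=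
  (semiconjBy_neg_inv_symm h).inv_symm_left

lemma commute_mul_self_of_semiconjBy_neg_inv (h : SemiconjBy s A (-A⁻¹)) : Commute (s * s) A :=
  (semiconjBy_neg_inv_symm h).mul_left h

lemma inv_mul_mul_self_eq_one_of_semiconjBy_neg_inv (h : SemiconjBy s A (-A⁻¹))
    (hs : s * s = -1) : s⁻¹ * A * (s⁻¹ * A) = 1 := by
  calc s⁻¹ * A * (s⁻¹ * A) = -A⁻¹ * s⁻¹ * (s⁻¹ * A) := by rw [semiconjBy_inv_left_neg_inv h]
    _ = -A⁻¹ * (s * s)⁻¹ * A := by simp only [_root_.mul_inv_rev, mul_assoc]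
    _ = 1 := by simp [hs]

end SkewReversers

section RingWithSkewReverser

variable {M : Type*} [Ring M] {A g : Mˣ} {a b : M}

lemma add_mul_mul_sub_mul_inv (hAa : Commute (A : M) a) (hAb : Commute (A : M) b)
    (hab : a * b = 0) (hba : b * a = 0) :
    (a + b * A) * (a - b * ↑A⁻¹) = a ^ 2 - b ^ 2 := by
  have h₁ : a * (b * ↑A⁻¹) = 0 := by rw [← mul_assoc, hab, zero_mul]
  have h₂ : b * A * a = 0 := by rw [mul_assoc, hAa.eq, ← mul_assoc, hba, zero_mul]
  have h₃ : b * A * (b * ↑A⁻¹) = b ^ 2 := by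
    rw [← hAb.eq, mul_assoc, ← mul_assoc b, ← sq, ← mul_assoc, (hAb.pow_right 2).eq,
      Units.mul_inv_cancel_right]
  rw [add_mul, mul_sub, mul_sub, h₁, h₂, h₃]
  noncomm_ring

lemma add_mul_mul_inv_mul_self_eq_neg_one (hg : SemiconjBy g A (-A⁻¹))
    (hAa : Commute (A : M) a) (hAb : Commute (A : M) b)
    (hga : Commute (g : M) a) (hgb : Commute (g : M) b)
    (hab : a * b = 0) (hba : b * a = 0) (hsub : b ^ 2 - a ^ 2 = ↑(g * g)) :
    (a + b * A) * ↑g⁻¹ * ((a + b * A) * ↑g⁻¹) = -1 := by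
  have hgA : SemiconjBy (↑g⁻¹ : M) A (-↑A⁻¹) := (semiconjBy_inv_left_neg_inv hg).units_val
  have hw : SemiconjBy (↑g⁻¹ : M) (a + b * A) (a - b * ↑A⁻¹) := by
    rw [sub_eq_add_neg, ← mul_neg]
    exact .add_right hga.units_inv_left (.mul_right hgb.units_inv_left hgA)
  calc (a + b * A) * ↑g⁻¹ * ((a + b * A) * ↑g⁻¹)
      = (a + b * A) * (↑g⁻¹ * (a + b * A)) * ↑g⁻¹ := by simp only [mul_assoc]
    _ = (a + b * A) * (a - b * ↑A⁻¹) * ↑(g * g)⁻¹ := by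
      rw [hw.eq, _root_.mul_inv_rev, Units.val_mul]; simp only [mul_assoc]
    _ = -↑(g * g) * ↑(g * g)⁻¹ := by
      rw [add_mul_mul_sub_mul_inv hAa hAb hab hba, ← hsub, neg_sub]
    _ = -1 := by rw [neg_mul, Units.mul_inv]

lemma semiconjBy_add_mul_mul_inv (hg : SemiconjBy g A (-A⁻¹))
    (hAa : Commute (A : M) a) (hAb : Commute (A : M) b) :
    SemiconjBy ((a + b * A) * ↑g⁻¹) (A : M) (-↑A⁻¹) := by
  have hA : Commute (a + b * A) (A : M) := hAa.symm.add_left (hAb.symm.mul_left (.refl _))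
  exact SemiconjBy.mul_left hA.units_inv_right.neg_right (semiconjBy_inv_left_neg_inv hg).units_val

end RingWithSkewReverser

theorem exists_semiconjBy_neg_inv_mul_self_eq_neg_one {M : Type*} [Ring M] [Algebra ℝ M]
    [Algebra.IsIntegral ℝ M] {A g : Mˣ} (hg : SemiconjBy g A (-A⁻¹)) :
    ∃ s : Mˣ, SemiconjBy s A (-A⁻¹) ∧ s * s = -1 := by
  obtain ⟨a, ha, b, hb, hab, hba, hsub⟩ :=
    exists_mem_adjoin_mul_eq_zero_sq_sub_sq_eq (u := g * g)
      (Algebra.IsIntegral.isIntegral (R := ℝ) ((g * g : Mˣ) : M))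
  have commute_A {x : M} (hx : x ∈ Algebra.adjoin ℝ {((g * g : Mˣ) : M)}) : Commute (A : M) x :=
    Algebra.commute_of_mem_adjoin_singleton_of_commute hx
      (commute_mul_self_of_semiconjBy_neg_inv hg).symm.units_val
  have commute_g {x : M} (hx : x ∈ Algebra.adjoin ℝ {((g * g : Mˣ) : M)}) : Commute (g : M) x :=
    Algebra.commute_of_mem_adjoin_singleton_of_commute hx
      ((Commute.refl g).mul_right (.refl g)).units_val
  have hs := add_mul_mul_inv_mul_self_eq_neg_one hg (commute_A ha) (commute_A hb)
    (commute_g ha) (commute_g hb) hab hba hsub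
  refine ⟨⟨(a + b * A) * ↑g⁻¹, -((a + b * A) * ↑g⁻¹), ?_, ?_⟩, ?_, Units.ext hs⟩
  · rw [mul_neg, hs, neg_neg]
  · rw [neg_mul, hs, neg_neg]
  · exact (semiconjBy_add_mul_mul_inv hg (commute_A ha) (commute_A hb)).units_of_val

/-- The map `δ` plays the role of the determinant. -/
theorem product_skewInvolution_involution_general {M : Type*} [Ring M] [Algebra ℝ M]
    [Algebra.IsIntegral ℝ M] {R : Type*} [Ring R] [LinearOrder R] [IsStrictOrderedRing R]
    (δ : M →* R) (A g : Mˣ) (hA : δ A = 1) (hg : g * A * g⁻¹ = -A⁻¹) :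
    ∃ σ τ : Mˣ, δ σ = 1 ∧ δ τ = 1 ∧
      σ.val * σ.val = -1 ∧ τ.val * τ.val = 1 ∧ A = σ * τ := by
  obtain ⟨σ, hσA, hσ⟩ :=
    exists_semiconjBy_neg_inv_mul_self_eq_neg_one (mul_inv_eq_iff_eq_mul.1 hg)
  have hσ_val : σ.val * σ.val = -1 := congrArg Units.val hσ
  have hδσ : δ σ = 1 := map_eq_one_of_mul_self_eq_neg_one δ hσ_val
  have hA_eq : A = σ * (σ⁻¹ * A) := (mul_inv_cancel_left σ A).symm
  have hδτ : δ ↑(σ⁻¹ * A) = 1 := by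
    rwa [hA_eq, Units.val_mul, map_mul, hδσ, one_mul] at hA
  exact ⟨σ, σ⁻¹ * A, hδσ, hδτ, hσ_val,
    congrArg Units.val (inv_mul_mul_self_eq_one_of_semiconjBy_neg_inv hσA hσ), hA_eq⟩

section QuaternionicDeterminant

open ComplexConjugate

lemma qc1_mul (p q : Quaternion ℝ) : qc1 (p * q) = qc1 p * qc1 q - qc2 p * conj (qc2 q) := by
  apply Complex.ext <;> simp [qc1, qc2] <;> ring

lemma qc2_mul (p q : Quaternion ℝ) : qc2 (p * q) = qc1 p * qc2 q + qc2 p * conj (qc1 q) := by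
  apply Complex.ext <;> simp [qc1, qc2] <;> ring

lemma qc1_zero : qc1 0 = 0 := rfl

lemma qc2_zero : qc2 0 = 0 := rfl

lemma qc1_add (p q : Quaternion ℝ) : qc1 (p + q) = qc1 p + qc1 q := by
  apply Complex.ext <;> simp [qc1]

lemma qc2_add (p q : Quaternion ℝ) : qc2 (p + q) = qc2 p + qc2 q := by
  apply Complex.ext <;> simp [qc2]

lemma qc1_sum {ι : Type*} (s : Finset ι) (f : ι → Quaternion ℝ) :
    qc1 (∑ i ∈ s, f i) = ∑ i ∈ s, qc1 (f i) :=
  map_sum (AddMonoidHom.mk' qc1 qc1_add) f s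

lemma qc2_sum {ι : Type*} (s : Finset ι) (f : ι → Quaternion ℝ) :
    qc2 (∑ i ∈ s, f i) = ∑ i ∈ s, qc2 (f i) :=
  map_sum (AddMonoidHom.mk' qc2 qc2_add) f s

lemma qc1_one : qc1 1 = 1 := rfl

lemma qc2_one : qc2 1 = 0 := rfl

lemma Phi_one {m : Type*} [DecidableEq m] : Phi (1 : Matrix m m (Quaternion ℝ)) = 1 := by
  rw [Phi, ← fromBlocks_one]
  congr 1 <;> ext1 i j <;> by_cases hij : i = j <;>
    simp [hij, one_apply, qc1_zero, qc2_zero, qc1_one, qc2_one]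

lemma Phi_mul {m : Type*} [Fintype m] (A B : Matrix m m (Quaternion ℝ)) :
    Phi (A * B) = Phi A * Phi B := by
  rw [Phi, Phi, Phi, fromBlocks_multiply]
  congr 1 <;> ext1 i j <;>
    simp [mul_apply, qc1_sum, qc2_sum, qc1_mul, qc2_mul, Finset.sum_add_distrib,
      sub_eq_add_neg, add_comm]

variable {m : Type*} [Fintype m] [DecidableEq m]

lemma J_mul_Phi (A : Matrix m m (Quaternion ℝ)) :
    J m ℂ * Phi A = (Phi A).map conj * J m ℂ := by
  simp [J, Phi, fromBlocks_multiply, fromBlocks_map, Matrix.map_neg, Matrix.map_map,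
    Function.comp_def]

lemma conj_qdet (A : Matrix m m (Quaternion ℝ)) : conj (qdet A) = qdet A := by
  have hJ : (J m ℂ).det ≠ 0 := (isUnit_det_J m ℂ).ne_zero
  have hdet : (J m ℂ).det * qdet A = conj (qdet A) * (J m ℂ).det := by
    simpa only [qdet, det_mul, RingHom.map_det, RingHom.mapMatrix_apply] using
      congrArg det (J_mul_Phi A)
  exact (mul_right_cancel₀ hJ ((mul_comm _ _).trans hdet)).symm

/-- The quaternionic determinant as a multiplicative map to `ℝ`; taking the real part loses nothing,
see `ofReal_qdetHom`. -/
def qdetHom : Matrix m m (Quaternion ℝ) →* ℝ where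
  toFun A := (qdet A).re
  map_one' := by simp [qdet, Phi_one]
  map_mul' A B := by
    have hA : (qdet A).im = 0 := Complex.conj_eq_iff_im.1 (conj_qdet A)
    rw [qdet, Phi_mul, det_mul, ← qdet, ← qdet, Complex.mul_re, hA, zero_mul, sub_zero]

lemma ofReal_qdetHom (A : Matrix m m (Quaternion ℝ)) : (qdetHom A : ℂ) = qdet A :=
  Complex.conj_eq_iff_re.1 (conj_qdet A)

lemma qdetHom_eq_one_iff {A : Matrix m m (Quaternion ℝ)} : qdetHom A = 1 ↔ qdet A = 1 := by
  rw [← ofReal_qdetHom, Complex.ofReal_eq_one]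

end QuaternionicDeterminant

/-- If `A ∈ SL(n, ℍ)` satisfies `g A g⁻¹ = -A⁻¹` for some `g ∈ SL(n, ℍ)`, then `A` is a
product of a skew-involution and an involution in `SL(n, ℍ)`. -/
theorem product_skewInvolution_involution (n : ℕ)
    (A : (Matrix (Fin n) (Fin n) (Quaternion ℝ))ˣ) (hA : qdet A.val = 1)
    (h : ∃ g : (Matrix (Fin n) (Fin n) (Quaternion ℝ))ˣ,
      qdet g.val = 1 ∧ g * A * g⁻¹ = -A⁻¹) :
    ∃ σ τ : (Matrix (Fin n) (Fin n) (Quaternion ℝ))ˣ,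
      qdet σ.val = 1 ∧ qdet τ.val = 1 ∧
      σ.val * σ.val = -1 ∧ τ.val * τ.val = 1 ∧ A = σ * τ := by
  obtain ⟨g, -, hg⟩ := h
  simpa only [qdetHom_eq_one_iff] using
    product_skewInvolution_involution_general qdetHom A g (qdetHom_eq_one_iff.2 hA) hg
end
end

section
/- For μ ∈ {1, −1} and n ≥ 1, the matrix Ω(μ,n), regarded as an element of SL(n,ℍ), is an involution (Ω(μ,n)² = Iₙ) and satisfies Ω(μ,n) · J(μ,n) · Ω(μ,n)⁻¹ = (J(μ,n))⁻¹; consequently the Jordan block J(μ,n) is strongly reversible in SL(n,ℍ). -/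
set_option maxHeartbeats 1000000

noncomputable section

open Matrix

/-- The entries of the matrix `Ω(λ, n)` (with `1`-based indices `i, j ∈ {1, …, n}`):
`x i j = 0` for `i > j` or `j > n`; `x i n = 0` for `i ≠ n`; `x n n = 1`; and
`x i j = -λ⁻¹ • x (i+1) j - λ⁻² • x (i+1) (j+1)` for `1 ≤ i ≤ j ≤ n - 1`. -/
def omegaAux (lam : ℂ) (n : ℕ) (i j : ℕ) : ℂ :=
  if h1 : j < i ∨ n < j then 0
  else if h2 : j = n then (if i = n then 1 else 0)
  else -lam⁻¹ * omegaAux lam n (i + 1) j - (lam⁻¹) ^ 2 * omegaAux lam n (i + 1) (j + 1)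
termination_by n - i
decreasing_by all_goals omega

/-- The upper triangular matrix `Ω(λ, n)`. -/
def Omega (lam : ℂ) (n : ℕ) : Matrix (Fin n) (Fin n) ℂ :=
  Matrix.of fun i j => omegaAux lam n ((i : ℕ) + 1) ((j : ℕ) + 1)

/-!
Left multiplication by `J(λ)` scales each entry by `λ` and adds the entry below it; right
multiplication by `J(λ⁻¹)` scales by `λ⁻¹` and adds the entry to the left. The recurrence defining
`Ω(λ)` is therefore exactly the matrix identity `J(λ) Ω(λ) J(λ⁻¹) = Ω(λ)`. Applying it to `λ` and to
`λ⁻¹` shows that `Ω(λ) Ω(λ⁻¹)` commutes with `J(λ)`. A matrix commuting with `J(λ)` is determined by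
its last column, since the last basis vector is cyclic, and the last column of `Ω(λ) Ω(λ⁻¹)` is that
of the identity; hence `Ω(λ) Ω(λ⁻¹) = 1`. For `μ = ±1` we have `μ⁻¹ = μ`.
-/

theorem mul_mul_inv_eq_inv_of_mul_mul_eq {G : Type*} [Group G] {g a : G} (h : a * g * a = g) :
    g * a * g⁻¹ = a⁻¹ :=
  eq_inv_of_mul_eq_one_right (by rw [← mul_assoc, ← mul_assoc, h, mul_inv_cancel])

section QuaternionicMatrices

variable {m : Type*}

theorem Phi_map_C2H (M : Matrix m m ℂ) :
    Phi (M.map C2H) = fromBlocks M 0 0 (M.map (starRingEnd ℂ)) := by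
  ext (i | i) (j | j) <;> simp [Phi, C2H, qc1, qc2, Complex.ext_iff]

variable [Fintype m] [DecidableEq m]

theorem qdet_map_C2H (M : Matrix m m ℂ) : qdet (M.map C2H) = (‖M.det‖ : ℂ) ^ 2 := by
  rw [qdet, Phi_map_C2H, det_fromBlocks_zero₂₁, ← Complex.mul_conj', RingHom.map_det,
    RingHom.mapMatrix_apply]

theorem qdet_map_C2H_eq_one_of_pow_eq_one {M : Matrix m m ℂ} {k : ℕ} (hM : M ^ k = 1)
    (hk : k ≠ 0) : qdet (M.map C2H) = 1 := by
  have norm_det : ‖M.det‖ = 1 :=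
    Complex.norm_eq_one_of_pow_eq_one (by rw [← det_pow, hM, det_one]) hk
  simp [qdet_map_C2H, norm_det]

end QuaternionicMatrices

section JordanBlock

variable {ι : Type*} {n : ℕ}

theorem jordanC_row_castSucc (lam : ℂ) (i : Fin n) :
    jordanC lam (n + 1) i.castSucc = Pi.single i.castSucc lam + Pi.single i.succ 1 := by
  ext k
  simp only [jordanC, of_apply, Pi.add_apply, Pi.single_apply, Fin.ext_iff, Fin.val_castSucc,
    Fin.val_succ]
  split_ifs <;> first | omega | simp

theorem jordanC_row_last (lam : ℂ) (n : ℕ) :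
    jordanC lam (n + 1) (Fin.last n) = Pi.single (Fin.last n) lam := by
  ext k
  simp only [jordanC, of_apply, Pi.single_apply, Fin.ext_iff, Fin.val_last]
  split_ifs <;> first | omega | rfl

theorem jordanC_col_succ (lam : ℂ) (j : Fin n) :
    (jordanC lam (n + 1)).col j.succ = Pi.single j.succ lam + Pi.single j.castSucc 1 := by
  ext k
  simp only [jordanC, col_apply, of_apply, Pi.add_apply, Pi.single_apply, Fin.ext_iff,
    Fin.val_castSucc, Fin.val_succ]
  split_ifs <;> first | omega | simp

theorem jordanC_col_zero (lam : ℂ) (n : ℕ) :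
    (jordanC lam (n + 1)).col 0 = Pi.single 0 lam := by
  ext k
  simp only [jordanC, col_apply, of_apply, Pi.single_apply, Fin.ext_iff, Fin.val_zero]
  split_ifs <;> first | omega | rfl | contradiction

theorem jordanC_mul_apply_castSucc (lam : ℂ) (M : Matrix (Fin (n + 1)) ι ℂ) (i : Fin n) (j : ι) :
    (jordanC lam (n + 1) * M) i.castSucc j = lam * M i.castSucc j + M i.succ j := by
  simp [mul_apply', jordanC_row_castSucc, add_dotProduct]

theorem jordanC_mul_apply_last (lam : ℂ) (M : Matrix (Fin (n + 1)) ι ℂ) (j : ι) :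
    (jordanC lam (n + 1) * M) (Fin.last n) j = lam * M (Fin.last n) j := by
  simp [mul_apply', jordanC_row_last]

theorem mul_jordanC_apply_succ (lam : ℂ) (M : Matrix ι (Fin (n + 1)) ℂ) (i : ι) (j : Fin n) :
    (M * jordanC lam (n + 1)) i j.succ = M i j.succ * lam + M i j.castSucc := by
  change M i ⬝ᵥ (jordanC lam (n + 1)).col j.succ = _
  simp [jordanC_col_succ, dotProduct_add]

theorem mul_jordanC_apply_zero (lam : ℂ) (M : Matrix ι (Fin (n + 1)) ℂ) (i : ι) :
    (M * jordanC lam (n + 1)) i 0 = M i 0 * lam := by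
  change M i ⬝ᵥ (jordanC lam (n + 1)).col 0 = _
  simp [jordanC_col_zero]

theorem det_jordanC (lam : ℂ) (n : ℕ) : (jordanC lam n).det = lam ^ n := by
  have upperTriangular : (jordanC lam n).IsUpperTriangular := by
    intro i j (hji : j < i)
    have : (j : ℕ) < i := hji
    simp only [jordanC, of_apply]
    rw [if_neg (by omega), if_neg (by omega)]
  rw [det_of_isUpperTriangular upperTriangular]
  simp [jordanC]

theorem qdet_jordanH (lam : ℂ) (n : ℕ) : qdet (jordanH lam n) = (‖lam‖ : ℂ) ^ (2 * n) := by
  rw [jordanH, qdet_map_C2H, det_jordanC, norm_pow, Complex.ofReal_pow, ← pow_mul, mul_comm]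

theorem isUnit_jordanC {lam : ℂ} (hlam : lam ≠ 0) (n : ℕ) : IsUnit (jordanC lam n) := by
  rw [isUnit_iff_isUnit_det, det_jordanC]
  exact (pow_ne_zero n hlam).isUnit

theorem apply_castSucc_of_commute_jordanC {lam : ℂ} {X : Matrix (Fin (n + 1)) (Fin (n + 1)) ℂ}
    (hX : Commute (jordanC lam (n + 1)) X) (i j : Fin n) :
    X i.castSucc j.castSucc = X i.succ j.succ := by
  have entry := congr_fun₂ hX.eq i.castSucc j.succ
  rw [jordanC_mul_apply_castSucc, mul_jordanC_apply_succ] at entry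
  linear_combination -entry

theorem apply_last_castSucc_of_commute_jordanC {lam : ℂ}
    {X : Matrix (Fin (n + 1)) (Fin (n + 1)) ℂ} (hX : Commute (jordanC lam (n + 1)) X)
    (j : Fin n) : X (Fin.last n) j.castSucc = 0 := by
  have entry := congr_fun₂ hX.eq (Fin.last n) j.succ
  rw [jordanC_mul_apply_last, mul_jordanC_apply_succ] at entry
  linear_combination -entry

theorem eq_of_commute_jordanC_of_col_last_eq {lam : ℂ}
    {X Y : Matrix (Fin (n + 1)) (Fin (n + 1)) ℂ}
    (hX : Commute (jordanC lam (n + 1)) X) (hY : Commute (jordanC lam (n + 1)) Y)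
    (hlast : X.col (Fin.last n) = Y.col (Fin.last n)) : X = Y := by
  refine ext_col fun j => ?_
  induction j using Fin.reverseInduction with
  | last => exact hlast
  | cast j ih =>
    ext i
    cases i using Fin.lastCases with
    | last =>
      simp only [col_apply, apply_last_castSucc_of_commute_jordanC hX,
        apply_last_castSucc_of_commute_jordanC hY]
    | cast i =>
      simpa [apply_castSucc_of_commute_jordanC hX, apply_castSucc_of_commute_jordanC hY]
        using congr_fun ih i.succ

end JordanBlock

section Omega

theorem omegaAux_eq_zero_of_lt (lam : ℂ) (n : ℕ) {i j : ℕ} (hji : j < i) :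
    omegaAux lam n i j = 0 := by
  rw [omegaAux, dif_pos (Or.inl hji)]

theorem omegaAux_self_right (lam : ℂ) (n i : ℕ) :
    omegaAux lam n i n = if i = n then 1 else 0 := by
  rw [omegaAux]
  split_ifs <;> first | omega | rfl

theorem omegaAux_recurrence (lam : ℂ) {n j : ℕ} (hjn : j < n) (i : ℕ) :
    omegaAux lam n i j =
      -lam⁻¹ * omegaAux lam n (i + 1) j - lam⁻¹ ^ 2 * omegaAux lam n (i + 1) (j + 1) := by
  by_cases hji : j < i
  · simp [omegaAux_eq_zero_of_lt lam n (show j < i by omega),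
      omegaAux_eq_zero_of_lt lam n (show j < i + 1 by omega),
      omegaAux_eq_zero_of_lt lam n (show j + 1 < i + 1 by omega)]
  · rw [omegaAux, dif_neg (by omega), dif_neg (by omega)]

theorem Omega_col_last (lam : ℂ) (n : ℕ) :
    (Omega lam (n + 1)).col (Fin.last n) = Pi.single (Fin.last n) 1 := by
  ext i
  simp [Omega, omegaAux_self_right, Pi.single_apply, Fin.ext_iff]

theorem jordanC_mul_Omega_apply (lam : ℂ) {n : ℕ} (i j : Fin (n + 1)) :
    (jordanC lam (n + 1) * Omega lam (n + 1)) i j =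
      lam * omegaAux lam (n + 1) (i + 1) (j + 1) + omegaAux lam (n + 1) (i + 2) (j + 1) := by
  cases i using Fin.lastCases with
  | last =>
    have below_zero : omegaAux lam (n + 1) (n + 2) (j + 1) = 0 :=
      omegaAux_eq_zero_of_lt lam _ (by omega)
    simp [jordanC_mul_apply_last, Omega, below_zero]
  | cast i => simp [jordanC_mul_apply_castSucc, Omega, add_assoc]

theorem jordanC_mul_Omega_mul_jordanC_inv {lam : ℂ} (hlam : lam ≠ 0) (n : ℕ) :
    jordanC lam n * Omega lam n * jordanC lam⁻¹ n = Omega lam n := by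
  cases n with
  | zero => exact Subsingleton.elim _ _
  | succ n =>
    ext i j
    cases j using Fin.cases with
    | zero =>
      have below_zero : omegaAux lam (n + 1) (i + 2) 1 = 0 :=
        omegaAux_eq_zero_of_lt lam _ (by omega)
      rw [mul_jordanC_apply_zero, jordanC_mul_Omega_apply]
      simp only [Omega, of_apply, Fin.val_zero, zero_add, below_zero]
      field_simp
      ring
    | succ j =>
      have recurrence := omegaAux_recurrence lam (show (j : ℕ) + 1 < n + 1 by omega) (i + 1)
      rw [mul_jordanC_apply_succ, jordanC_mul_Omega_apply, jordanC_mul_Omega_apply]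
      simp only [Omega, of_apply, Fin.val_succ, Fin.val_castSucc, recurrence]
      field_simp
      ring

theorem commute_jordanC_Omega_mul_Omega_inv {lam : ℂ} (hlam : lam ≠ 0) (n : ℕ) :
    Commute (jordanC lam n) (Omega lam n * Omega lam⁻¹ n) := by
  have intertwine := jordanC_mul_Omega_mul_jordanC_inv hlam n
  have intertwine_inv := jordanC_mul_Omega_mul_jordanC_inv (inv_ne_zero hlam) n
  rw [inv_inv] at intertwine_inv
  calc jordanC lam n * (Omega lam n * Omega lam⁻¹ n)
      = jordanC lam n * Omega lam n *
          (jordanC lam⁻¹ n * Omega lam⁻¹ n * jordanC lam n) := by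
        rw [intertwine_inv, mul_assoc]
    _ = jordanC lam n * Omega lam n * jordanC lam⁻¹ n * Omega lam⁻¹ n * jordanC lam n := by
        simp only [mul_assoc]
    _ = Omega lam n * Omega lam⁻¹ n * jordanC lam n := by rw [intertwine]

theorem Omega_mul_Omega_inv {lam : ℂ} (hlam : lam ≠ 0) (n : ℕ) :
    Omega lam n * Omega lam⁻¹ n = 1 := by
  cases n with
  | zero => exact Subsingleton.elim _ _
  | succ n =>
    refine eq_of_commute_jordanC_of_col_last_eq (commute_jordanC_Omega_mul_Omega_inv hlam _)
      (Commute.one_right _) ?_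
    ext i
    change Omega lam (n + 1) i ⬝ᵥ (Omega lam⁻¹ (n + 1)).col (Fin.last n) = _
    rw [Omega_col_last, dotProduct_single_one]
    simpa [one_apply, Pi.single_apply] using congr_fun (Omega_col_last lam n) i

end Omega

/-- For `μ ∈ {1, -1}` and `n ≥ 1`, the matrix `Ω(μ, n)`, viewed as an element of
`SL(n, ℍ)`, is an involution conjugating `J(μ, n)` to its inverse; consequently `J(μ, n)`
is strongly reversible in `SL(n, ℍ)`. -/
theorem Omega_involution_reverses_jordan_pm_one (n : ℕ) (hn : 1 ≤ n)
    (μ : ℂ) (hμ : μ = 1 ∨ μ = -1) :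
    ∃ g A : (Matrix (Fin n) (Fin n) (Quaternion ℝ))ˣ,
      g.val = (Omega μ n).map C2H ∧ A.val = jordanH μ n ∧
      qdet g.val = 1 ∧ qdet A.val = 1 ∧ g * g = 1 ∧ g * A * g⁻¹ = A⁻¹ := by
  have μ_sq : μ ^ 2 = 1 := sq_eq_one_iff.mpr hμ
  have μ_inv : μ⁻¹ = μ := inv_eq_of_mul_eq_one_left (by rw [← sq, μ_sq])
  have μ_ne_zero : μ ≠ 0 := by rcases hμ with rfl | rfl <;> norm_num
  have norm_μ : ‖μ‖ = 1 := Complex.norm_eq_one_of_pow_eq_one μ_sq two_ne_zero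
  have Omega_mul_self : Omega μ n * Omega μ n = 1 := by
    simpa only [μ_inv] using Omega_mul_Omega_inv μ_ne_zero n
  let g : (Matrix (Fin n) (Fin n) ℂ)ˣ := ⟨Omega μ n, Omega μ n, Omega_mul_self, Omega_mul_self⟩
  obtain ⟨A, hA⟩ := isUnit_jordanC μ_ne_zero n
  have g_mul_self : g * g = 1 := Units.ext Omega_mul_self
  have A_mul_g_mul_A : A * g * A = g := Units.ext <| by
    simpa only [Units.val_mul, hA, μ_inv] using jordanC_mul_Omega_mul_jordanC_inv μ_ne_zero n
  let toQuaternionic := Units.map (Quaternion.ofComplex.mapMatrix (m := Fin n)).toMonoidHom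
  have val_A : (toQuaternionic A).val = jordanH μ n := congrArg (·.map C2H) hA
  refine ⟨toQuaternionic g, toQuaternionic A, rfl, val_A, ?_, ?_, ?_, ?_⟩
  · exact qdet_map_C2H_eq_one_of_pow_eq_one ((sq _).trans Omega_mul_self) two_ne_zero
  · simp [val_A, qdet_jordanH, norm_μ]
  · rw [← map_mul, g_mul_self, map_one]
  · apply mul_mul_inv_eq_inv_of_mul_mul_eq
    rw [← map_mul, ← map_mul, A_mul_g_mul_A]
end
end
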